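/- Let D be a PMF on a countable set α, let n ∈ ℕ, p ∈ (0,1), f : α^n → [−1,1], S = D^n, and μ = E_{z←S}[f(z)]. Let Ŝ be the PMF on α^n with Ŝ(z) = ((2 + p + p·f(z))/(2 + p + p·μ))·S(z). Then for every i ∈ {1,…,n} and every prefix (d_1,…,d_i) with D(d_1)·…·D(d_i) > 0, the conditional probability of the i-th coordinate under Ŝ satisfies Pr_Ŝ[z_i = d_i | z_1 = d_1,…,z_{i−1} = d_{i−1}] = D(d_i)·(2 + p·(1 + f̂[d_1,…,d_i]))/(2 + p·(1 + f̂[d_1,…,d_{i−1}])). -/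

import Mathlib

/-!
Let `W i = ∏_{j < i} D (d j)` be the marginal of `D^n` at the length-`i` prefix of `d`
(`prefixProb_prod`), which rests on Fubini for nonnegative product weights on `α^n`
(`hasSum_pi_prod`). The tilted weight is affine in `f`, so summing it over the strings extending
that prefix gives
`prefixProb Ŝ i d = W i * (2 + p * (1 + f̂[d_{≤i}])) / (2 + p + p * μ)` (`prefixProb_tilt`).
In the quotient of two consecutive prefix marginals the normalising constant cancels, and
`W i = D (d_i) * W (i - 1)` leaves the factor `D (d_i)`.
-/

open scoped Classical

/-- `prefixProb T i d` is the probability, under the (sub)probability mass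
function `T` on `α^n`, of the event that the first `i` coordinates agree with
those of `d` (the prefix marginal of `T` at the length-`i` prefix of `d`). -/
noncomputable def prefixProb {α : Type*} {n : ℕ} (T : (Fin n → α) → ℝ)
    (i : ℕ) (d : Fin n → α) : ℝ :=
  ∑' z : Fin n → α, if ∀ j : Fin n, (j : ℕ) < i → z j = d j then T z else 0

/-- `partialAvg D S f i d` is the partial average `f̂[d_{≤i}]`: the expectation
of `f` over `z ← S = D^n` conditioned on the first `i` coordinates of `z`
agreeing with those of `d` (for the product distribution this is the average of
`f` over i.i.d. completions `d_{i+1},…,d_n ← D`). -/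
noncomputable def partialAvg {α : Type*} {n : ℕ} (S : (Fin n → α) → ℝ)
    (f : (Fin n → α) → ℝ) (i : ℕ) (d : Fin n → α) : ℝ :=
  (∑' z : Fin n → α,
      (if ∀ j : Fin n, (j : ℕ) < i → z j = d j then S z else 0) * f z) /
    prefixProb S i d

/-- Fubini for nonnegative product weights: the total mass of `z ↦ ∏ j, g j (z j)` on `α^n` is the
product of the total masses of the `g j`. -/
theorem hasSum_pi_prod {α : Type*} {n : ℕ} (g : Fin n → α → ℝ) (s : Fin n → ℝ)
    (hg0 : ∀ j a, 0 ≤ g j a) (hg : ∀ j, HasSum (g j) (s j)) :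
    HasSum (fun z : Fin n → α => ∏ j, g j (z j)) (∏ j, s j) := by
  induction n with
  | zero =>
    simp
  | succ n ih =>
    have htail := ih (fun j => g j.succ) (fun j => s j.succ) (fun j => hg0 j.succ)
      (fun j => hg j.succ)
    have h0 : (0 : α → ℝ) ≤ g 0 := hg0 0
    have h1 : (0 : (Fin n → α) → ℝ) ≤ fun z => ∏ j, g j.succ (z j) :=
      fun z => Finset.prod_nonneg fun j _ => hg0 j.succ (z j)
    have hsum := (hg 0).summable.mul_of_nonneg htail.summable h0 h1
    have hmul := (hg 0).mul htail hsum
    let e : α × (Fin n → α) ≃ (Fin (n + 1) → α) := Fin.consEquiv fun _ => α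
    rw [Fin.prod_univ_succ, ← e.hasSum_iff]
    refine hmul.congr_fun fun x => ?_
    simp [e, Fin.consEquiv, Fin.prod_univ_succ]

/-- The product weight restricted to the strings extending a length-`i` prefix is again a product
weight, with a point mass at `d j` in each coordinate `j < i`; its total mass is
`∏_{j < i} D (d j)`. -/
theorem hasSum_prefix {α : Type*} {n : ℕ} {D : α → ℝ} (hD0 : ∀ a, 0 ≤ D a) (hD1 : HasSum D 1)
    (i : ℕ) (d : Fin n → α) :
    HasSum (fun z : Fin n → α =>
        if ∀ j : Fin n, (j : ℕ) < i → z j = d j then ∏ j, D (z j) else 0)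
      (∏ j : Fin n, if (j : ℕ) < i then D (d j) else 1) := by
  have h := hasSum_pi_prod
    (fun (j : Fin n) a => if (j : ℕ) < i → a = d j then D a else 0)
    (fun j => if (j : ℕ) < i then D (d j) else 1)
    (fun j a => by split_ifs <;> simp [hD0])
    (fun j => by
      by_cases hj : (j : ℕ) < i
      · have h1 := hasSum_ite_eq (d j) (D (d j))
        simp only [hj, if_true, forall_const]
        refine h1.congr_fun fun a => ?_
        by_cases ha : a = d j <;> simp [ha]
      · simpa [hj] using hD1)
  refine h.congr_fun fun z => ?_
  by_cases hz : ∀ j : Fin n, (j : ℕ) < i → z j = d j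
  · rw [if_pos hz]
    exact Finset.prod_congr rfl fun j _ => (if_pos (hz j)).symm
  · rw [if_neg hz]
    obtain ⟨j, hj⟩ := not_forall.mp hz
    exact (Finset.prod_eq_zero (Finset.mem_univ j) (if_neg hj)).symm

theorem prefixProb_prod {α : Type*} {n : ℕ} {D : α → ℝ} (hD0 : ∀ a, 0 ≤ D a) (hD1 : HasSum D 1)
    (i : ℕ) (d : Fin n → α) :
    prefixProb (fun z : Fin n → α => ∏ j, D (z j)) i d
      = ∏ j : Fin n, if (j : ℕ) < i then D (d j) else 1 :=
  (hasSum_prefix hD0 hD1 i d).tsum_eq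

theorem summable_mul_of_mem_Icc {β : Type*} {w f : β → ℝ} (hw0 : ∀ z, 0 ≤ w z) (hw : Summable w)
    (hf : ∀ z, f z ∈ Set.Icc (-1 : ℝ) 1) : Summable fun z => w z * f z := by
  refine Summable.of_norm_bounded hw fun z => ?_
  rw [Real.norm_eq_abs, abs_mul, abs_of_nonneg (hw0 z)]
  exact mul_le_of_le_one_right (hw0 z) (abs_le.mpr (hf z))

/-- Prefix marginals of a weight that is affine in `f`, expressed through the prefix marginals and
partial averages of the base weight `S`. -/
theorem prefixProb_tilt {α : Type*} {n : ℕ} {S f : (Fin n → α) → ℝ} (hS0 : ∀ z, 0 ≤ S z)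
    (hf : ∀ z, f z ∈ Set.Icc (-1 : ℝ) 1) (p c : ℝ) (i : ℕ) (d : Fin n → α)
    (hsum : Summable fun z : Fin n → α =>
      if ∀ j : Fin n, (j : ℕ) < i → z j = d j then S z else 0)
    (hW : prefixProb S i d ≠ 0) :
    prefixProb (fun z => (2 + p + p * f z) / c * S z) i d
      = prefixProb S i d * (2 + p * (1 + partialAvg S f i d)) / c := by
  set w : (Fin n → α) → ℝ := fun z =>
    if ∀ j : Fin n, (j : ℕ) < i → z j = d j then S z else 0 with hw
  have hw0 : ∀ z, 0 ≤ w z := fun z => by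
    simp only [hw]; split_ifs
    · exact hS0 z
    · exact le_rfl
  have havg : prefixProb S i d * partialAvg S f i d = ∑' z, w z * f z :=
    mul_div_cancel₀ _ hW
  have hlin := ((hsum.hasSum.mul_left (2 + p)).add
    ((summable_mul_of_mem_Icc hw0 hsum hf).hasSum.mul_left p)).div_const c
  have htilt : prefixProb (fun z => (2 + p + p * f z) / c * S z) i d
      = ((2 + p) * prefixProb S i d + p * ∑' z, w z * f z) / c := by
    refine (hlin.congr_fun fun z => ?_).tsum_eq
    simp only [hw]
    split_ifs <;> ring
  rw [htilt, ← havg]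
  ring

/-- For the `p`-resetting tilted distribution
`Ŝ(z) = ((2 + p + p·f(z))/(2 + p + p·μ))·D^n(z)` with `f : α^n → [−1,1]`, the
conditional probability of the `i`-th coordinate given any prefix of positive
probability is `D(d_i)·(2 + p·(1 + f̂[d_{≤i}]))/(2 + p·(1 + f̂[d_{≤i−1}]))`. -/
theorem pRes_tilted_conditional {α : Type*} [Countable α]
    (D : α → ℝ) (hD0 : ∀ a, 0 ≤ D a) (hD1 : HasSum D 1)
    (n : ℕ) (p : ℝ) (hp : p ∈ Set.Ioo (0 : ℝ) 1)
    (f : (Fin n → α) → ℝ) (hf : ∀ z, f z ∈ Set.Icc (-1 : ℝ) 1)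
    (S : (Fin n → α) → ℝ) (hS : S = fun z => ∏ j, D (z j))
    (μ : ℝ) (hμ : μ = ∑' z, S z * f z)
    (Shat : (Fin n → α) → ℝ)
    (hShat : Shat = fun z => (2 + p + p * f z) / (2 + p + p * μ) * S z)
    (i : ℕ) (hi1 : 1 ≤ i) (hi2 : i ≤ n) (d : Fin n → α)
    (hpos : ∀ j : Fin n, (j : ℕ) < i → 0 < D (d j)) :
    prefixProb Shat i d / prefixProb Shat (i - 1) d
      = D (d ⟨i - 1, by omega⟩)
          * (2 + p * (1 + partialAvg S f i d))
          / (2 + p * (1 + partialAvg S f (i - 1) d)) := by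
  subst hS hShat
  have hS0 : ∀ z : Fin n → α, 0 ≤ ∏ j, D (z j) := fun z => Finset.prod_nonneg fun j _ => hD0 _
  have hS1 : HasSum (fun z : Fin n → α => ∏ j, D (z j)) 1 := by
    simpa using hasSum_pi_prod (fun _ : Fin n => D) (fun _ => 1) (fun _ => hD0) (fun _ => hD1)
  have hμ1 : -1 ≤ μ := by
    rw [hμ]
    refine hasSum_le (fun z => ?_) hS1.neg (summable_mul_of_mem_Icc hS0 hS1.summable hf).hasSum
    have := mul_le_mul_of_nonneg_left (hf z).1 (hS0 z)
    linarith
  have hc : 2 + p + p * μ ≠ 0 := by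
    have := mul_le_mul_of_nonneg_left hμ1 hp.1.le
    linarith
  have hWpos : ∀ k ≤ i, (∏ j : Fin n, if (j : ℕ) < k then D (d j) else 1) ≠ 0 := fun k hk =>
    Finset.prod_ne_zero_iff.mpr fun j _ => by
      split_ifs with hj
      · exact (hpos j (hj.trans_le hk)).ne'
      · exact one_ne_zero
  have hmarg : ∀ k ≤ i, prefixProb
        (fun z => (2 + p + p * f z) / (2 + p + p * μ) * ∏ j, D (z j)) k d
      = (∏ j : Fin n, if (j : ℕ) < k then D (d j) else 1)
        * (2 + p * (1 + partialAvg (fun z => ∏ j, D (z j)) f k d)) / (2 + p + p * μ) := by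
    intro k hk
    have hW := prefixProb_prod hD0 hD1 k d
    rw [prefixProb_tilt hS0 hf p _ k d (hasSum_prefix hD0 hD1 k d).summable
      (hW ▸ hWpos k hk), hW]
  have hstep : (∏ j : Fin n, if (j : ℕ) < i then D (d j) else 1)
      = D (d ⟨i - 1, by omega⟩) * ∏ j : Fin n, if (j : ℕ) < i - 1 then D (d j) else 1 := by
    have hmem := Finset.mem_univ (⟨i - 1, by omega⟩ : Fin n)
    rw [← Finset.mul_prod_erase _ _ hmem, ← Finset.mul_prod_erase _ (fun j : Fin n =>
      if (j : ℕ) < i - 1 then D (d j) else 1) hmem, if_pos (Nat.sub_one_lt_of_le hi1 le_rfl),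
      if_neg (lt_irrefl _), one_mul]
    congr 1
    refine Finset.prod_congr rfl fun j hj => ?_
    have hne : (j : ℕ) ≠ i - 1 := fun h => Finset.ne_of_mem_erase hj (Fin.ext h)
    have hiff : (j : ℕ) < i ↔ (j : ℕ) < i - 1 := by omega
    simp only [hiff]
  rw [hmarg i le_rfl, hmarg (i - 1) (Nat.sub_le _ _), hstep, div_div_div_cancel_right₀ hc,
    mul_right_comm, mul_comm _ (∏ j : Fin n, if (j : ℕ) < i - 1 then D (d j) else 1),
    mul_div_mul_left _ _ (hWpos (i - 1) (Nat.sub_le _ _))]
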